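/- Let λ, μ₁ ∈ ℝ and let n be an integer with 2 ≤ n ≤ 4. Then there exists a constant ε > 0 such that the equation 2r²h(r)h''(r) = (n-1)h(r)(h(r)-1) + r h'(r)(r h'(r) - λr - (n-1)), h(r) > 0, has a unique solution h ∈ C²((0,ε)) ∩ C¹([0,ε)) on (0,ε) satisfying h(0) = 1 and h'(0) = μ₁. -/

import Mathlib

open Set Filter Topology

/-- `h` is a solution of
`2r²h h'' = (n-1)h(h-1) + r h'(r h' - λr - (n-1))`, `h > 0` on `(0,ε)`,
with `h ∈ C²((0,ε)) ∩ C¹([0,ε))`, `h(0) = 1` and `h'(0) = μ₁`. -/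
def IsSolOn (n : ℕ) (lam μ₁ ε : ℝ) (h : ℝ → ℝ) : Prop :=
  ContDiffOn ℝ 2 h (Set.Ioo 0 ε) ∧ ContDiffOn ℝ 1 h (Set.Ico 0 ε) ∧
  (∀ r ∈ Set.Ioo (0 : ℝ) ε,
    2 * r ^ 2 * h r * deriv (deriv h) r =
      ((n : ℝ) - 1) * h r * (h r - 1) +
        r * deriv h r * (r * deriv h r - lam * r - ((n : ℝ) - 1)) ∧ 0 < h r) ∧
  h 0 = 1 ∧ derivWithin h (Set.Ici 0) 0 = μ₁

/-!
Write `h = 1 + r w` and `v = r w'`. With `k = (n + 1) / 2 > 0` the equation becomes the first order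
system `w' = v / r`, `v' = -k v / r + F (r, w, v)`, where `F` is smooth as long as `1 + r w > 0`,
and the initial conditions become `(w, v) = (μ₁, 0)` at `r = 0`.

For a source `g (r)` in place of `F (r, w, v)` the system is solved explicitly by averages of `g`
over dilates, and its solution on `[0, ε]` depends on `g` with Lipschitz constant `ε`. Hence the
map sending `g` to `r ↦ F (r, w, v)` is a contraction for small `ε`, and its fixed point gives a
solution.

In the coordinates `(k w + v, v)` the singular part of the system is diagonal with entries `0` and
`-k / r ≤ 0`. So it does not increase the energy `E = (k w + v)² + v²` of the difference of two
solutions, which therefore satisfies `E' ≤ C E` with `E 0 = 0` and vanishes.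
-/

section DilationMean

variable {E : Type*} [NormedAddCommGroup E] [NormedSpace ℝ E] {k r : ℝ} {f g : ℝ → E}

/-- The integral of `g` over the dilates `r * t`, `0 ≤ t ≤ 1`, with weight `t ^ k`. The function
`y = dilationMean k g` is the solution of `r y' + (k + 1) y = g` that stays bounded at `r = 0`. -/
noncomputable def dilationMean (k : ℝ) (g : ℝ → E) (r : ℝ) : E :=
  ∫ t in (0 : ℝ)..1, t ^ k • g (r * t)

theorem continuous_dilationMean (hk : 0 ≤ k) (hg : Continuous g) :
    Continuous (dilationMean k g) := by
  have := Real.continuous_rpow_const hk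
  unfold dilationMean
  fun_prop

theorem dist_dilationMean_le (hk : 0 ≤ k) (hf : Continuous f) (hg : Continuous g) {C : ℝ}
    (hfg : ∀ s, dist (f s) (g s) ≤ C) (r : ℝ) :
    dist (dilationMean k f r) (dilationMean k g r) ≤ C := by
  have := Real.continuous_rpow_const hk
  have hint {g : ℝ → E} (hg : Continuous g) :
      IntervalIntegrable (fun t ↦ t ^ k • g (r * t)) MeasureTheory.volume 0 1 :=
    Continuous.intervalIntegrable (by fun_prop) 0 1
  have hbound (t : ℝ) (ht : t ∈ uIoc (0 : ℝ) 1) : ‖t ^ k • f (r * t) - t ^ k • g (r * t)‖ ≤ C := by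
    rw [uIoc_of_le zero_le_one] at ht
    rw [← smul_sub, norm_smul, Real.norm_of_nonneg (Real.rpow_nonneg ht.1.le k), ← dist_eq_norm]
    exact (mul_le_of_le_one_left dist_nonneg (Real.rpow_le_one ht.1.le ht.2 hk)).trans (hfg _)
  rw [dist_eq_norm, dilationMean, dilationMean, ← intervalIntegral.integral_sub (hint hf) (hint hg)]
  simpa using intervalIntegral.norm_integral_le_of_norm_le_const hbound

theorem smul_dilationMean_eq (k : ℝ) (g : ℝ → E) (hr : 0 < r) :
    r • dilationMean k g r = r ^ (-k) • ∫ s in (0 : ℝ)..r, s ^ k • g s := by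
  have hscale : ∫ t in (0 : ℝ)..1, (r * t) ^ k • g (r * t) = r ^ k • dilationMean k g r := by
    rw [dilationMean, ← intervalIntegral.integral_smul]
    refine intervalIntegral.integral_congr fun t ht ↦ ?_
    rw [uIcc_of_le zero_le_one] at ht
    simp only [Real.mul_rpow hr.le ht.1, mul_smul]
  have hsubst := intervalIntegral.smul_integral_comp_mul_left (fun s ↦ s ^ k • g s) r
    (a := 0) (b := 1)
  rw [mul_zero, mul_one, hscale] at hsubst
  rw [← hsubst, smul_smul, smul_smul, mul_right_comm, ← Real.rpow_add hr, neg_add_cancel,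
    Real.rpow_zero, one_mul]

theorem hasDerivAt_smul_dilationMean [CompleteSpace E] (hk : 0 ≤ k) (hg : Continuous g)
    (hr : 0 < r) :
    HasDerivAt (fun s ↦ s • dilationMean k g s) (g r - k • dilationMean k g r) r := by
  have := Real.continuous_rpow_const hk
  have hprimitive : HasDerivAt (fun s ↦ ∫ x in (0 : ℝ)..s, x ^ k • g x) (r ^ k • g r) r :=
    (Continuous.integral_hasStrictDerivAt (by fun_prop) 0 r).hasDerivAt
  have hproduct := (Real.hasDerivAt_rpow_const (p := -k) (Or.inl hr.ne')).smul hprimitive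
  refine (hproduct.congr_of_eventuallyEq ?_).congr_deriv ?_
  · filter_upwards [Ioi_mem_nhds hr] with s hs using smul_dilationMean_eq k g hs
  · have hinv : r ^ (-k) * r ^ k = 1 := by
      rw [← Real.rpow_add hr, neg_add_cancel, Real.rpow_zero]
    have hmean : dilationMean k g r = r⁻¹ • r ^ (-k) • ∫ s in (0 : ℝ)..r, s ^ k • g s := by
      rw [← smul_dilationMean_eq k g hr, inv_smul_smul₀ hr.ne']
    rw [smul_smul, hinv, one_smul, hmean, Real.rpow_sub_one hr.ne', sub_eq_add_neg]
    module

end DilationMean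

theorem nonpos_of_hasDerivAt_le_mul {φ φ' : ℝ → ℝ} {a b C : ℝ} (hφ : ContinuousOn φ (Icc a b))
    (hderiv : ∀ x ∈ Ioo a b, HasDerivAt φ (φ' x) x) (hle : ∀ x ∈ Ioo a b, φ' x ≤ C * φ x)
    (ha : φ a ≤ 0) : ∀ x ∈ Icc a b, φ x ≤ 0 := by
  have hexp (x : ℝ) : HasDerivAt (fun x ↦ Real.exp (-C * x)) (Real.exp (-C * x) * -C) x := by
    simpa using ((hasDerivAt_id x).const_mul (-C)).exp
  have hanti : AntitoneOn (fun x ↦ Real.exp (-C * x) * φ x) (Icc a b) := by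
    refine antitoneOn_of_hasDerivWithinAt_nonpos (convex_Icc a b)
      (f' := fun x ↦ Real.exp (-C * x) * -C * φ x + Real.exp (-C * x) * φ' x)
      (by fun_prop) (fun x hx ↦ ?_) (fun x hx ↦ ?_) <;> rw [interior_Icc] at hx
    · exact ((hexp x).mul (hderiv x hx)).hasDerivWithinAt
    · nlinarith [Real.exp_pos (-C * x), hle x hx]
  intro x hx
  have hstart : Real.exp (-C * x) * φ x ≤ Real.exp (-C * a) * φ a :=
    hanti (left_mem_Icc.2 (hx.1.trans hx.2)) hx hx.1
  have hprod := hstart.trans (mul_nonpos_of_nonneg_of_nonpos (Real.exp_pos _).le ha)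
  exact nonpos_of_mul_nonpos_right hprod (Real.exp_pos _)

/-- `u = (w, v)` solves `w' = v / r`, `v' = -k v / r + F (r, w, v)` on `(0, ε)`, is continuous up to
`r = 0`, and starts from `(μ, 0)`. -/
structure IsSingularSolOn (k : ℝ) (F : ℝ × ℝ × ℝ → ℝ) (μ ε : ℝ) (u : ℝ → ℝ × ℝ) : Prop where
  continuousOn : ContinuousOn u (Ico 0 ε)
  hasDerivAt : ∀ r ∈ Ioo 0 ε, HasDerivAt u ((u r).2 / r, -k * (u r).2 / r + F (r, u r)) r
  apply_zero : u 0 = (μ, 0)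

namespace IsSingularSolOn

variable {k μ δ ε r : ℝ} {F G : ℝ × ℝ × ℝ → ℝ} {u : ℝ → ℝ × ℝ}

theorem hasDerivAt_fst (hu : IsSingularSolOn k F μ ε u) (hr : r ∈ Ioo 0 ε) :
    HasDerivAt (fun s ↦ (u s).1) ((u r).2 / r) r :=
  (ContinuousLinearMap.fst ℝ ℝ ℝ).hasFDerivAt.comp_hasDerivAt r (hu.hasDerivAt r hr)

theorem hasDerivAt_snd (hu : IsSingularSolOn k F μ ε u) (hr : r ∈ Ioo 0 ε) :
    HasDerivAt (fun s ↦ (u s).2) (-k * (u r).2 / r + F (r, u r)) r :=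
  (ContinuousLinearMap.snd ℝ ℝ ℝ).hasFDerivAt.comp_hasDerivAt r (hu.hasDerivAt r hr)

theorem mono (hu : IsSingularSolOn k F μ ε u) (hδ : δ ≤ ε) : IsSingularSolOn k F μ δ u where
  continuousOn := hu.continuousOn.mono (Ico_subset_Ico_right hδ)
  hasDerivAt r hr := hu.hasDerivAt r (Ioo_subset_Ioo_right hδ hr)
  apply_zero := hu.apply_zero

theorem congr (hu : IsSingularSolOn k F μ ε u)
    (hFG : ∀ r ∈ Ioo 0 ε, F (r, u r) = G (r, u r)) : IsSingularSolOn k G μ ε u where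
  continuousOn := hu.continuousOn
  hasDerivAt r hr := hFG r hr ▸ hu.hasDerivAt r hr
  apply_zero := hu.apply_zero

end IsSingularSolOn

section Uniqueness

variable {k μ ε r : ℝ} {F : ℝ × ℝ × ℝ → ℝ} {u₁ u₂ : ℝ → ℝ × ℝ}

/-- The sum of the squares of the coordinates `k w + v` and `v`, in which the linear part
`(v / r, -k v / r)` of the singular system is diagonal, with entries `0` and `-k / r`. -/
def diagonalEnergy (k : ℝ) (x : ℝ × ℝ) : ℝ :=
  (k * x.1 + x.2) ^ 2 + x.2 ^ 2

theorem norm_sq_le_mul_diagonalEnergy (hk : 0 < k) (x : ℝ × ℝ) :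
    ‖x‖ ^ 2 ≤ (1 + 2 / k ^ 2) * diagonalEnergy k x := by
  obtain ⟨w, v⟩ := x
  have henergy : 0 ≤ diagonalEnergy k (w, v) := by unfold diagonalEnergy; positivity
  have hw : w ^ 2 ≤ 2 / k ^ 2 * diagonalEnergy k (w, v) := by
    rw [div_mul_eq_mul_div, le_div_iff₀ (by positivity)]
    simp only [diagonalEnergy]
    nlinarith [sq_nonneg (k * w + 2 * v)]
  have hv : v ^ 2 ≤ diagonalEnergy k (w, v) := le_add_of_nonneg_left (sq_nonneg _)
  have hscaled : 0 ≤ 2 / k ^ 2 * diagonalEnergy k (w, v) := by positivity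
  rcases max_choice ‖w‖ ‖v‖ with hmax | hmax <;>
    · rw [Prod.norm_mk, hmax, Real.norm_eq_abs, sq_abs]
      linarith

theorem hasDerivAt_diagonalEnergy_sub (h₁ : IsSingularSolOn k F μ ε u₁)
    (h₂ : IsSingularSolOn k F μ ε u₂) (hr : r ∈ Ioo 0 ε) :
    HasDerivAt (fun s ↦ diagonalEnergy k (u₁ s - u₂ s))
      (2 * (k * (u₁ r - u₂ r).1 + 2 * (u₁ r - u₂ r).2) * (F (r, u₁ r) - F (r, u₂ r))
        - 2 * k * (u₁ r - u₂ r).2 ^ 2 / r) r := by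
  have hw := (h₁.hasDerivAt_fst hr).sub (h₂.hasDerivAt_fst hr)
  have hv := (h₁.hasDerivAt_snd hr).sub (h₂.hasDerivAt_snd hr)
  refine ((((hw.const_mul k).add hv).pow 2).add (hv.pow 2)).congr_deriv ?_
  simp only [Pi.add_apply, Pi.sub_apply, Prod.fst_sub, Prod.snd_sub]
  have := hr.1.ne'
  field_simp
  ring

theorem mul_le_mul_diagonalEnergy (hk : 0 < k) {L D : ℝ} (x : ℝ × ℝ) (hD : |D| ≤ L * ‖x‖) :
    2 * (k * x.1 + 2 * x.2) * D ≤ (2 + L ^ 2 * (1 + 2 / k ^ 2)) * diagonalEnergy k x := by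
  have hDsq : D ^ 2 ≤ L ^ 2 * ((1 + 2 / k ^ 2) * diagonalEnergy k x) := calc
    D ^ 2 ≤ (L * ‖x‖) ^ 2 := sq_le_sq.2 (hD.trans (le_abs_self _))
    _ = L ^ 2 * ‖x‖ ^ 2 := mul_pow _ _ _
    _ ≤ _ := by gcongr; exact norm_sq_le_mul_diagonalEnergy hk x
  have hyoung : 2 * (k * x.1 + 2 * x.2) * D ≤ 2 * diagonalEnergy k x + D ^ 2 := by
    unfold diagonalEnergy
    nlinarith [sq_nonneg (k * x.1 + 2 * x.2 - D), sq_nonneg (k * x.1)]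
  linarith

theorem IsSingularSolOn.eqOn (hk : 0 < k) {U : Set (ℝ × ℝ × ℝ)} (hF : LocallyLipschitzOn U F)
    (h₁ : IsSingularSolOn k F μ ε u₁) (h₂ : IsSingularSolOn k F μ ε u₂)
    (hU₁ : ∀ r ∈ Ico 0 ε, (r, u₁ r) ∈ U) (hU₂ : ∀ r ∈ Ico 0 ε, (r, u₂ r) ∈ U) :
    EqOn u₁ u₂ (Ico 0 ε) := by
  intro R hR
  have hIcc : Icc 0 R ⊆ Ico 0 ε := fun r hr ↦ ⟨hr.1, hr.2.trans_lt hR.2⟩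
  have hIoo : Ioo 0 R ⊆ Ioo 0 ε := Ioo_subset_Ioo_right hR.2.le
  have hc₁ := h₁.continuousOn.mono hIcc
  have hc₂ := h₂.continuousOn.mono hIcc
  set K : Set (ℝ × ℝ × ℝ) := (fun r ↦ (r, u₁ r)) '' Icc 0 R ∪ (fun r ↦ (r, u₂ r)) '' Icc 0 R
  have hK : IsCompact K :=
    (isCompact_Icc.image_of_continuousOn (by fun_prop)).union
      (isCompact_Icc.image_of_continuousOn (by fun_prop))
  have hKU : K ⊆ U :=
    union_subset (image_subset_iff.2 fun r hr ↦ hU₁ r (hIcc hr))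
      (image_subset_iff.2 fun r hr ↦ hU₂ r (hIcc hr))
  obtain ⟨L, hL⟩ := (hF.mono hKU).exists_lipschitzOnWith_of_compact hK
  have hLip (r : ℝ) (hr : r ∈ Icc 0 R) : |F (r, u₁ r) - F (r, u₂ r)| ≤ L * ‖u₁ r - u₂ r‖ := by
    simpa [Real.dist_eq, Prod.dist_eq, ← dist_eq_norm] using
      hL.dist_le_mul _ (Or.inl ⟨r, hr, rfl⟩) _ (Or.inr ⟨r, hr, rfl⟩)
  have hcont : ContinuousOn (fun r ↦ diagonalEnergy k (u₁ r - u₂ r)) (Icc 0 R) := by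
    unfold diagonalEnergy
    fun_prop
  have henergy := nonpos_of_hasDerivAt_le_mul hcont
    (fun r hr ↦ hasDerivAt_diagonalEnergy_sub h₁ h₂ (hIoo hr))
    (fun r hr ↦ (sub_le_self _ (by have := hr.1; positivity)).trans
      (mul_le_mul_diagonalEnergy hk _ (hLip r (Ioo_subset_Icc_self hr))))
    (by simp [h₁.apply_zero, h₂.apply_zero, diagonalEnergy]) R (right_mem_Icc.2 hR.1)
  have hnorm : ‖u₁ R - u₂ R‖ ^ 2 ≤ 0 :=
    (norm_sq_le_mul_diagonalEnergy hk _).trans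
      (mul_nonpos_of_nonneg_of_nonpos (by positivity) henergy)
  exact sub_eq_zero.1 (norm_eq_zero.1 (pow_eq_zero_iff two_ne_zero |>.1
    (hnorm.antisymm (sq_nonneg _))))

end Uniqueness

section Existence

variable {k μ ε r : ℝ} {F : ℝ × ℝ × ℝ → ℝ} {f g : ℝ → ℝ}

/-- The solution `(w, v)` of the linear singular system `w' = v / r`, `v' = -k v / r + g (r)` that
starts from `(μ, 0)`. -/
noncomputable def linearSingularSol (k μ : ℝ) (g : ℝ → ℝ) (r : ℝ) : ℝ × ℝ :=
  (μ + ∫ s in (0 : ℝ)..r, dilationMean k g s, r * dilationMean k g r)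

theorem continuous_linearSingularSol (hk : 0 ≤ k) (hg : Continuous g) :
    Continuous (linearSingularSol k μ g) := by
  have hmean := continuous_dilationMean hk hg
  have := intervalIntegral.continuous_primitive (μ := MeasureTheory.volume)
    hmean.intervalIntegrable 0
  unfold linearSingularSol
  fun_prop

theorem isSingularSolOn_linearSingularSol (hk : 0 ≤ k) (hg : Continuous g) :
    IsSingularSolOn k (fun p ↦ g p.1) μ ε (linearSingularSol k μ g) where
  continuousOn := (continuous_linearSingularSol hk hg).continuousOn
  hasDerivAt r hr := by
    have hw := ((continuous_dilationMean hk hg).integral_hasStrictDerivAt 0 r).hasDerivAt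
    refine ((hw.const_add μ).prodMk (hasDerivAt_smul_dilationMean hk hg hr.1)).congr_deriv ?_
    have := hr.1.ne'
    simp only [linearSingularSol, smul_eq_mul, Prod.mk.injEq]
    constructor <;> field_simp
    ring
  apply_zero := by simp [linearSingularSol]

theorem dist_linearSingularSol_le (hk : 0 ≤ k) (hf : Continuous f) (hg : Continuous g) {C : ℝ}
    (hfg : ∀ s, dist (f s) (g s) ≤ C) (hr : 0 ≤ r) :
    dist (linearSingularSol k μ f r) (linearSingularSol k μ g r) ≤ r * C := by
  have hmean := dist_dilationMean_le hk hf hg hfg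
  refine max_le ?_ ?_
  · have hint := intervalIntegral.norm_integral_le_of_norm_le_const (a := 0) (b := r)
      (f := fun s ↦ dilationMean k f s - dilationMean k g s)
      (fun s _ ↦ dist_eq_norm (dilationMean k f s) _ ▸ hmean s)
    rw [intervalIntegral.integral_sub ((continuous_dilationMean hk hf).intervalIntegrable 0 r)
      ((continuous_dilationMean hk hg).intervalIntegrable 0 r), sub_zero, abs_of_nonneg hr,
      ← dist_eq_norm, mul_comm] at hint
    simpa only [linearSingularSol, dist_add_left] using hint
  · simp only [linearSingularSol, Real.dist_eq, ← mul_sub, abs_mul, abs_of_nonneg hr]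
    exact mul_le_mul_of_nonneg_left (hmean r) hr

/-- The map sending a source term `g` on `[0, ε]` to the source term `r ↦ F (r, u r)` produced by
the solution `u` of the linear singular system with source `g`. Its fixed points give the solutions
of the nonlinear system. -/
noncomputable def sourceMap (μ : ℝ) (hk : 0 ≤ k) (hε : 0 ≤ ε) (hF : Continuous F)
    (g : C(Icc 0 ε, ℝ)) : C(Icc 0 ε, ℝ) where
  toFun r := F (r, linearSingularSol k μ (IccExtend hε g) r)
  continuous_toFun := by
    have := continuous_linearSingularSol (μ := μ) hk (g.continuous.Icc_extend' (h := hε))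
    fun_prop

theorem lipschitzWith_sourceMap {L K : NNReal} (μ : ℝ) (hk : 0 ≤ k) (hε : 0 ≤ ε)
    (hF : LipschitzWith L F) (hK : L * ε ≤ K) :
    LipschitzWith K (sourceMap μ hk hε hF.continuous) := by
  refine LipschitzWith.of_dist_le_mul fun f g ↦ ?_
  refine (ContinuousMap.dist_le (by positivity)).2 fun r ↦ ?_
  have hsol := dist_linearSingularSol_le (μ := μ) hk (f.continuous.Icc_extend' (h := hε))
    g.continuous.Icc_extend' (fun _ ↦ ContinuousMap.dist_apply_le_dist _) r.2.1
  calc dist (sourceMap μ hk hε hF.continuous f r) (sourceMap μ hk hε hF.continuous g r)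
      ≤ L * dist (linearSingularSol k μ (IccExtend hε f) r)
          (linearSingularSol k μ (IccExtend hε g) r) :=
        (hF.dist_le_mul _ _).trans_eq
          (by rw [Prod.dist_eq, dist_self, max_eq_right dist_nonneg])
    _ ≤ L * (ε * dist f g) := by
        gcongr
        exact hsol.trans (by gcongr; exact r.2.2)
    _ = L * ε * dist f g := (mul_assoc _ _ _).symm
    _ ≤ K * dist f g := by gcongr

theorem exists_isSingularSolOn_of_lipschitzWith {L : NNReal} (μ : ℝ) (hk : 0 ≤ k)
    (hF : LipschitzWith L F) : ∃ ε > 0, ∃ u, IsSingularSolOn k F μ ε u := by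
  set ε : ℝ := 1 / (2 * (L + 1))
  have hε : 0 < ε := by positivity
  have hsmall : L * ε ≤ ((1 / 2 : NNReal) : ℝ) := by
    have : (0 : ℝ) ≤ L := L.2
    rw [mul_one_div, div_le_iff₀ (by positivity)]
    push_cast
    linarith
  have hcontract : ContractingWith (1 / 2) (sourceMap μ hk hε.le hF.continuous) :=
    ⟨by norm_num, lipschitzWith_sourceMap μ hk hε.le hF hsmall⟩
  obtain ⟨g, hfix, -⟩ := hcontract.exists_fixedPoint 0 (edist_ne_top _ _)
  refine ⟨ε, hε, _, (isSingularSolOn_linearSingularSol (g := IccExtend hε.le g) hk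
    g.continuous.Icc_extend').congr fun r hr ↦ ?_⟩
  rw [IccExtend_of_mem _ _ (Ioo_subset_Icc_self hr)]
  exact (DFunLike.congr_fun hfix ⟨r, Ioo_subset_Icc_self hr⟩).symm

theorem exists_isSingularSolOn {L : NNReal} {U : Set (ℝ × ℝ × ℝ)} (hk : 0 ≤ k)
    (hF : LipschitzOnWith L F U) (hU : U ∈ 𝓝 (0, μ, 0)) :
    ∃ ε > 0, ∃ u, IsSingularSolOn k F μ ε u ∧ ∀ r ∈ Ico 0 ε, (r, u r) ∈ U := by
  obtain ⟨G, hG, hFG⟩ := hF.extend_real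
  obtain ⟨ε, hε, u, hu⟩ := exists_isSingularSolOn_of_lipschitzWith μ hk hG
  have hgraph : Tendsto (fun r ↦ (r, u r)) (𝓝[≥] 0) (𝓝 (0, μ, 0)) := by
    rw [← nhdsWithin_Ico_eq_nhdsGE hε, ← hu.apply_zero]
    exact continuousWithinAt_id.prodMk (hu.continuousOn 0 ⟨le_rfl, hε⟩)
  obtain ⟨δ, hδ, hδU⟩ := mem_nhdsGE_iff_exists_Ico_subset.1 (hgraph hU)
  have hmem (r : ℝ) (hr : r ∈ Ico 0 (min ε δ)) : (r, u r) ∈ U :=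
    hδU ⟨hr.1, hr.2.trans_le (min_le_right _ _)⟩
  refine ⟨min ε δ, lt_min hε hδ, u, ?_, hmem⟩
  exact (hu.mono (min_le_left _ _)).congr fun r hr ↦ (hFG (hmem r (Ioo_subset_Ico_self hr))).symm

end Existence

section BlowUp

variable {h : ℝ → ℝ} {r ε : ℝ}

/-- The pair `(w, v)` with `h r = h 0 + r w` and `h' r = w + v`. At `r = 0`, where the difference
quotient is not defined, `w` is the right derivative of `h`. -/
noncomputable def blowUp (h : ℝ → ℝ) (r : ℝ) : ℝ × ℝ :=
  let w := Function.update (slope h 0) 0 (derivWithin h (Ici 0) 0) r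
  (w, derivWithin h (Ici 0) r - w)

theorem blowUp_zero (h : ℝ → ℝ) : blowUp h 0 = (derivWithin h (Ici 0) 0, 0) := by
  simp [blowUp]

theorem add_mul_blowUp_fst (h : ℝ → ℝ) (r : ℝ) : h 0 + r * (blowUp h r).1 = h r := by
  rcases eq_or_ne r 0 with rfl | hr
  · simp
  · simp [blowUp, hr, slope_def_field, mul_div_cancel₀]

theorem blowUp_fst_add_snd (h : ℝ → ℝ) (hr : 0 < r) :
    (blowUp h r).1 + (blowUp h r).2 = deriv h r := by
  simp [blowUp, derivWithin_of_mem_nhds (Ici_mem_nhds hr)]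

theorem hasDerivAt_blowUp_fst (hh : DifferentiableAt ℝ h r) (hr : 0 < r) :
    HasDerivAt (fun s ↦ (blowUp h s).1) ((blowUp h r).2 / r) r := by
  have hquot := (hh.hasDerivAt.sub_const (h 0)).div (hasDerivAt_id r) hr.ne'
  refine (hquot.congr_of_eventuallyEq ?_).congr_deriv ?_
  · filter_upwards [Ioi_mem_nhds hr] with s (hs : 0 < s)
    simp [← add_mul_blowUp_fst h s, hs.ne']
  · rw [← blowUp_fst_add_snd h hr, ← add_mul_blowUp_fst h r]
    have := hr.ne'
    simp only [id]
    field_simp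
    ring

theorem hasDerivAt_blowUp_snd (hh : DifferentiableAt ℝ h r) (hh' : DifferentiableAt ℝ (deriv h) r)
    (hr : 0 < r) :
    HasDerivAt (fun s ↦ (blowUp h s).2) (deriv (deriv h) r - (blowUp h r).2 / r) r := by
  refine (hh'.hasDerivAt.sub (hasDerivAt_blowUp_fst hh hr)).congr_of_eventuallyEq ?_
  filter_upwards [Ioi_mem_nhds hr] with s hs
  exact eq_sub_of_add_eq' (blowUp_fst_add_snd h hs)

theorem continuousOn_blowUp (hh : ContDiffOn ℝ 1 h (Ico 0 ε)) :
    ContinuousOn (blowUp h) (Ico 0 ε) := by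
  have hIci {r : ℝ} (hr : r ∈ Ico 0 ε) : derivWithin h (Ici 0) r = derivWithin h (Ico 0 ε) r := by
    rw [← Ici_inter_Iio, derivWithin_inter (Iio_mem_nhds hr.2)]
  have hderiv : ContinuousOn (derivWithin h (Ici 0)) (Ico 0 ε) :=
    (hh.continuousOn_derivWithin (uniqueDiffOn_Ico 0 ε) le_rfl).congr fun r hr ↦ hIci hr
  have hquot : ContinuousOn (fun r ↦ (blowUp h r).1) (Ico 0 ε) := by
    intro r hr
    have hdiff := hh.differentiableOn one_ne_zero r hr
    rcases hr.1.eq_or_lt with rfl | hpos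
    · refine continuousWithinAt_update_same.2 (hasDerivWithinAt_iff_tendsto_slope.1 ?_)
      exact hIci hr ▸ hdiff.hasDerivWithinAt
    · have hdiff := hdiff.differentiableAt (Ico_mem_nhds hpos hr.2)
      exact (hasDerivAt_blowUp_fst hdiff hpos).continuousAt.continuousWithinAt
  exact hquot.prodMk (hderiv.sub hquot)

end BlowUp

section Reduction

variable {n : ℕ} {lam μ ε : ℝ} {h : ℝ → ℝ} {u : ℝ → ℝ × ℝ}

/-- The regular part of the system satisfied by the blow-up `(w, v)` of a solution `h = 1 + r w`,
as a function of `(r, w, v)`. -/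
noncomputable def reducedForcing (n : ℕ) (lam : ℝ) : ℝ × ℝ × ℝ → ℝ := fun (r, w, v) ↦
  ((n - 1) * (w ^ 2 + v * w) + (w + v) * (w + v - lam)) / (2 * (1 + r * w))

theorem contDiffAt_reducedForcing {p : ℝ × ℝ × ℝ} (hp : 0 < 1 + p.1 * p.2.1) :
    ContDiffAt ℝ 1 (reducedForcing n lam) p := by
  have hdenom : 2 * (1 + p.1 * p.2.1) ≠ 0 := by positivity
  unfold reducedForcing
  fun_prop (disch := assumption)

theorem locallyLipschitzOn_reducedForcing :
    LocallyLipschitzOn {p | 0 < 1 + p.1 * p.2.1} (reducedForcing n lam) := by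
  intro p hp
  obtain ⟨L, t, ht, hL⟩ := (contDiffAt_reducedForcing hp).exists_lipschitzOnWith
  exact ⟨L, t, mem_nhdsWithin_of_mem_nhds ht, hL⟩

theorem ode_iff_eq_reducedForcing {r w v S : ℝ} (hr : r ≠ 0) (hpos : 0 < 1 + r * w) :
    2 * r ^ 2 * (1 + r * w) * S =
        (n - 1) * (1 + r * w) * (1 + r * w - 1) +
          r * (w + v) * (r * (w + v) - lam * r - (n - 1)) ↔
      S - v / r = -((n + 1) / 2) * v / r + reducedForcing n lam (r, w, v) := by
  have := hpos.ne'
  simp only [reducedForcing]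
  field_simp
  constructor <;> intro heq
  · exact mul_left_cancel₀ hr (by linear_combination heq)
  · linear_combination r * heq

namespace IsSolOn

theorem eq_one_add_mul_blowUp (hh : IsSolOn n lam μ ε h) (r : ℝ) :
    h r = 1 + r * (blowUp h r).1 :=
  hh.2.2.2.1 ▸ (add_mul_blowUp_fst h r).symm

theorem one_add_mul_blowUp_pos (hh : IsSolOn n lam μ ε h) {r : ℝ} (hr : r ∈ Ico 0 ε) :
    0 < 1 + r * (blowUp h r).1 := by
  rcases hr.1.eq_or_lt with rfl | hpos
  · simp
  · exact hh.eq_one_add_mul_blowUp r ▸ (hh.2.2.1 r ⟨hpos, hr.2⟩).2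

theorem isSingularSolOn_blowUp (hh : IsSolOn n lam μ ε h) :
    IsSingularSolOn ((n + 1) / 2) (reducedForcing n lam) μ ε (blowUp h) where
  continuousOn := continuousOn_blowUp hh.2.1
  apply_zero := by rw [blowUp_zero, hh.2.2.2.2]
  hasDerivAt r hr := by
    have hnhds := Ioo_mem_nhds hr.1 hr.2
    have hdiff := (hh.1.differentiableOn two_ne_zero).differentiableAt hnhds
    have hdiff' := ((contDiffOn_succ_iff_deriv_of_isOpen (n := 1) isOpen_Ioo).1
      hh.1).2.2.differentiableOn one_ne_zero |>.differentiableAt hnhds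
    have hode := (hh.2.2.1 r hr).1
    rw [← blowUp_fst_add_snd h hr.1, hh.eq_one_add_mul_blowUp r, ode_iff_eq_reducedForcing hr.1.ne'
      (hh.one_add_mul_blowUp_pos (Ioo_subset_Ico_self hr))] at hode
    exact (hasDerivAt_blowUp_fst hdiff hr.1).prodMk
      (hode ▸ hasDerivAt_blowUp_snd hdiff hdiff' hr.1)

theorem eqOn {g : ℝ → ℝ} (hg : IsSolOn n lam μ ε g) (hh : IsSolOn n lam μ ε h) :
    EqOn g h (Ico 0 ε) := by
  intro r hr
  have hblowUp : blowUp g r = blowUp h r :=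
    hg.isSingularSolOn_blowUp.eqOn (by positivity) locallyLipschitzOn_reducedForcing
      hh.isSingularSolOn_blowUp (fun _ ↦ hg.one_add_mul_blowUp_pos)
      (fun _ ↦ hh.one_add_mul_blowUp_pos) hr
  rw [hg.eq_one_add_mul_blowUp, hh.eq_one_add_mul_blowUp, hblowUp]

end IsSolOn

namespace IsSingularSolOn

variable {k r : ℝ} {F : ℝ × ℝ × ℝ → ℝ}

theorem hasDerivAt_one_add_mul_fst (hu : IsSingularSolOn k F μ ε u) (hr : r ∈ Ioo 0 ε) :
    HasDerivAt (fun s ↦ 1 + s * (u s).1) ((u r).1 + (u r).2) r := by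
  refine (((hasDerivAt_id r).mul (hu.hasDerivAt_fst hr)).const_add 1).congr_deriv ?_
  simp [mul_div_cancel₀ _ hr.1.ne']

theorem hasDerivWithinAt_one_add_mul_fst (hu : IsSingularSolOn k F μ ε u) (hr : r ∈ Ico 0 ε) :
    HasDerivWithinAt (fun s ↦ 1 + s * (u s).1) ((u r).1 + (u r).2) (Ico 0 ε) r := by
  rcases hr.1.eq_or_lt with rfl | hpos
  · have hw : Tendsto (fun s ↦ (u s).1) (𝓝[Ico 0 ε \ {0}] 0) (𝓝 (u 0).1) :=
      (hu.continuousOn 0 hr).fst.mono_left (nhdsWithin_mono 0 sdiff_subset)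
    rw [hasDerivWithinAt_iff_tendsto_slope, hu.apply_zero, add_zero]
    rw [hu.apply_zero] at hw
    refine hw.congr' ?_
    filter_upwards [self_mem_nhdsWithin] with s hs
    have : s ≠ 0 := hs.2
    simp [slope_def_field, this]
  · exact (hu.hasDerivAt_one_add_mul_fst ⟨hpos, hr.2⟩).hasDerivWithinAt

theorem contDiffOn_one_one_add_mul_fst (hu : IsSingularSolOn k F μ ε u) :
    ContDiffOn ℝ 1 (fun s ↦ 1 + s * (u s).1) (Ico 0 ε) := by
  have hcont := hu.continuousOn
  rw [contDiffOn_one_iff_derivWithin (uniqueDiffOn_Ico 0 ε)]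
  refine ⟨fun r hr ↦ (hu.hasDerivWithinAt_one_add_mul_fst hr).differentiableWithinAt, ?_⟩
  have hsum : ContinuousOn (fun r ↦ (u r).1 + (u r).2) (Ico 0 ε) := by fun_prop
  exact hsum.congr fun r hr ↦
    (hu.hasDerivWithinAt_one_add_mul_fst hr).derivWithin (uniqueDiffOn_Ico 0 ε r hr)

theorem contDiffOn (hu : IsSingularSolOn k F μ ε u)
    (hF : ContinuousOn (fun r ↦ F (r, u r)) (Ioo 0 ε)) : ContDiffOn ℝ 1 u (Ioo 0 ε) := by
  have hcont := hu.continuousOn.mono Ioo_subset_Ico_self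
  have hne (r : ℝ) (hr : r ∈ Ioo 0 ε) : r ≠ 0 := hr.1.ne'
  rw [contDiffOn_one_iff_derivWithin (uniqueDiffOn_Ioo 0 ε)]
  refine ⟨fun r hr ↦ (hu.hasDerivAt r hr).differentiableAt.differentiableWithinAt, ?_⟩
  have hrhs : ContinuousOn (fun r ↦ ((u r).2 / r, -k * (u r).2 / r + F (r, u r))) (Ioo 0 ε) := by
    refine ContinuousOn.prodMk ?_ (ContinuousOn.add ?_ hF) <;> fun_prop (disch := assumption)
  exact hrhs.congr fun r hr ↦
    (hu.hasDerivAt r hr).hasDerivWithinAt.derivWithin (uniqueDiffOn_Ioo 0 ε r hr)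

theorem contDiffOn_two_one_add_mul_fst (hu : IsSingularSolOn k F μ ε u)
    (hF : ContinuousOn (fun r ↦ F (r, u r)) (Ioo 0 ε)) :
    ContDiffOn ℝ 2 (fun s ↦ 1 + s * (u s).1) (Ioo 0 ε) := by
  have hcont := hu.contDiffOn hF
  refine (contDiffOn_succ_iff_deriv_of_isOpen (n := 1) isOpen_Ioo).2
    ⟨fun r hr ↦ (hu.hasDerivAt_one_add_mul_fst hr).differentiableAt.differentiableWithinAt,
      by simp, ?_⟩
  have hsum : ContDiffOn ℝ 1 (fun r ↦ (u r).1 + (u r).2) (Ioo 0 ε) := by fun_prop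
  exact hsum.congr fun r hr ↦ (hu.hasDerivAt_one_add_mul_fst hr).deriv

theorem deriv_deriv_one_add_mul_fst (hu : IsSingularSolOn k F μ ε u) (hr : r ∈ Ioo 0 ε) :
    deriv (deriv fun s ↦ 1 + s * (u s).1) r =
      (u r).2 / r + (-k * (u r).2 / r + F (r, u r)) := by
  have hderiv : deriv (fun s ↦ 1 + s * (u s).1) =ᶠ[𝓝 r] fun s ↦ (u s).1 + (u s).2 := by
    filter_upwards [Ioo_mem_nhds hr.1 hr.2] with s hs
    exact (hu.hasDerivAt_one_add_mul_fst hs).deriv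
  rw [hderiv.deriv_eq]
  exact ((hu.hasDerivAt_fst hr).add (hu.hasDerivAt_snd hr)).deriv

theorem isSolOn (hε : 0 < ε) (hu : IsSingularSolOn ((n + 1) / 2) (reducedForcing n lam) μ ε u)
    (hpos : ∀ r ∈ Ico 0 ε, 0 < 1 + r * (u r).1) :
    IsSolOn n lam μ ε (fun r ↦ 1 + r * (u r).1) := by
  have hF : ContinuousOn (fun r ↦ reducedForcing n lam (r, u r)) (Ioo 0 ε) :=
    locallyLipschitzOn_reducedForcing.continuousOn.comp
      (continuousOn_id.prodMk (hu.continuousOn.mono Ioo_subset_Ico_self))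
      (fun r hr ↦ hpos r (Ioo_subset_Ico_self hr))
  refine ⟨hu.contDiffOn_two_one_add_mul_fst hF, hu.contDiffOn_one_one_add_mul_fst,
    fun r hr ↦ ⟨?_, hpos r (Ioo_subset_Ico_self hr)⟩, by simp, ?_⟩
  · rw [(hu.hasDerivAt_one_add_mul_fst hr).deriv, hu.deriv_deriv_one_add_mul_fst hr,
      ode_iff_eq_reducedForcing hr.1.ne' (hpos r (Ioo_subset_Ico_self hr)), add_sub_cancel_left]
  · have hzero := hu.hasDerivWithinAt_one_add_mul_fst (left_mem_Ico.2 hε)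
    rw [hu.apply_zero, add_zero, ← Ici_inter_Iio, hasDerivWithinAt_inter (Iio_mem_nhds hε)] at hzero
    exact hzero.derivWithin (uniqueDiffOn_Ici 0 0 self_mem_Ici)

end IsSingularSolOn

theorem exists_isSolOn (n : ℕ) (lam μ : ℝ) : ∃ ε > 0, ∃ h, IsSolOn n lam μ ε h := by
  have hpos : {p : ℝ × ℝ × ℝ | 0 < 1 + p.1 * p.2.1} ∈ 𝓝 (0, μ, 0) :=
    (isOpen_lt (by fun_prop) (by fun_prop)).mem_nhds (by simp)
  have hsmooth : ContDiffAt ℝ 1 (reducedForcing n lam) (0, μ, 0) :=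
    contDiffAt_reducedForcing (by simp)
  obtain ⟨L, t, ht, hL⟩ := hsmooth.exists_lipschitzOnWith
  obtain ⟨ε, hε, u, hu, hmem⟩ := exists_isSingularSolOn (k := (n + 1) / 2) (by positivity)
    (hL.mono inter_subset_left) (inter_mem ht hpos)
  exact ⟨ε, hε, _, hu.isSolOn hε fun r hr ↦ (hmem r hr).2⟩

end Reduction

theorem local_existence_uniqueness_general (lam μ₁ : ℝ) (n : ℕ) :
    ∃ ε : ℝ, 0 < ε ∧
      ∃ h : ℝ → ℝ, IsSolOn n lam μ₁ ε h ∧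
        ∀ g : ℝ → ℝ, IsSolOn n lam μ₁ ε g → Set.EqOn g h (Set.Ico 0 ε) := by
  obtain ⟨ε, hε, h, hh⟩ := exists_isSolOn n lam μ₁
  exact ⟨ε, hε, h, hh, fun g hg ↦ hg.eqOn hh⟩

theorem local_existence_uniqueness (lam μ₁ : ℝ) (n : ℕ) (hn2 : 2 ≤ n) (hn4 : n ≤ 4) :
    ∃ ε : ℝ, 0 < ε ∧
      ∃ h : ℝ → ℝ, IsSolOn n lam μ₁ ε h ∧
        ∀ g : ℝ → ℝ, IsSolOn n lam μ₁ ε g → Set.EqOn g h (Set.Ico 0 ε) :=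
  local_existence_uniqueness_general lam μ₁ n
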